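/- Let A be an integrally closed residuated lattice, with ~a := a\e (= e/a), satisfying ~~a = a for all a ∈ A. Then a·(a\e) = e for all a ∈ A; that is, A is a lattice-ordered group with group inverse a⁻¹ = ~a. -/

import Mathlib

/-- A residuated lattice: a lattice-ordered monoid with left and right residuals,
i.e. `b ≤ a\c ↔ a*b ≤ c ↔ a ≤ c/b`.  `ldiv a c` denotes `a\c` and `rdiv c b` denotes `c/b`. -/
class ResiduatedLattice (α : Type*) extends Lattice α, Monoid α where
  ldiv : α → α → α
  rdiv : α → α → α
  le_ldiv_iff : ∀ a b c : α, b ≤ ldiv a c ↔ a * b ≤ c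
  le_rdiv_iff : ∀ a b c : α, a ≤ rdiv c b ↔ a * b ≤ c

open ResiduatedLattice

namespace ResiduatedLattice

variable {α : Type*} [ResiduatedLattice α]

theorem one_ldiv (a : α) : ldiv 1 a = a :=
  eq_of_forall_le_iff fun x => by rw [le_ldiv_iff, one_mul]

theorem ldiv_ldiv (a b c : α) : ldiv a (ldiv b c) = ldiv (b * a) c :=
  eq_of_forall_le_iff fun x => by simp only [le_ldiv_iff, mul_assoc]

end ResiduatedLattice

/-- An integrally closed residuated lattice satisfying `~~x ≈ x` satisfies
`x·(x\e) ≈ e`, i.e. it is an ℓ-group with group inverse `a⁻¹ = ~a`,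
where `~a := a\e = e/a`. -/
theorem lgroup_of_notnot_eq_self {α : Type*} [ResiduatedLattice α]
    (hic : ∀ a : α, ldiv a a = 1 ∧ rdiv a a = 1)
    (hinv : ∀ a : α, ldiv (ldiv a 1) 1 = a) :
    ∀ a : α, a * ldiv a 1 = 1 := by
  intro a
  have ldiv_one_eq_one : ldiv (a * ldiv a 1) 1 = 1 := by
    rw [← ldiv_ldiv, (hic (ldiv a 1)).1]
  calc
    a * ldiv a 1 = ldiv (ldiv (a * ldiv a 1) 1) 1 := (hinv _).symm
    _ = ldiv 1 1 := by rw [ldiv_one_eq_one]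
    _ = 1 := one_ldiv 1
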